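/- Let G be a strong tournament of order n ≥ 3. Then the Wiener index of ILTT(G) satisfies W(ILTT(G)) = 4(n + W(G)). -/

import Mathlib

open scoped Classical

noncomputable section

/-- A tournament: a finite directed graph where every pair of distinct nodes
is joined by exactly one arc. -/
structure Tournament where
  V : Type
  [fintypeV : Fintype V]
  [decEqV : DecidableEq V]
  arc : V → V → Prop
  irrefl : ∀ x, ¬ arc x x
  exactlyOne : ∀ x y, x ≠ y → (arc x y ↔ ¬ arc y x)

attribute [instance] Tournament.fintypeV Tournament.decEqV

namespace Tournament

/-- The ILTT extension: vertices are `V ⊕ V` where `Sum.inl x` is the original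
node `x` and `Sum.inr x` is its clone `x'`. -/
def ILTT (T : Tournament) : Tournament where
  V := T.V ⊕ T.V
  arc := fun u v =>
    match u, v with
    | Sum.inl x, Sum.inl y => T.arc x y
    | Sum.inl x, Sum.inr y => T.arc x y
    | Sum.inr x, Sum.inl y => T.arc x y ∨ x = y
    | Sum.inr x, Sum.inr y => T.arc x y
  irrefl := by rintro (x | x) h <;> exact T.irrefl x h
  exactlyOne := by
    rintro (x | x) (y | y) hxy
    · exact T.exactlyOne x y (fun h => hxy (by rw [h]))
    · by_cases h : x = y
      · subst h; simp [T.irrefl x]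
      · have := T.exactlyOne x y h
        simp only [not_or]
        constructor
        · intro ha; exact ⟨this.mp ha, fun h' => h h'.symm⟩
        · intro ha; exact this.mpr ha.1
    · by_cases h : x = y
      · subst h; simp [T.irrefl x]
      · have := T.exactlyOne x y h
        constructor
        · rintro (ha | ha)
          · exact this.mp ha
          · exact absurd ha h
        · intro ha; exact Or.inl (this.mpr ha)
    · exact T.exactlyOne x y (fun h => hxy (by rw [h]))

/-- The dual ILTT extension: identical to `ILTT` except the arcs between
clones are reversed. -/
def ILTTd (T : Tournament) : Tournament where
  V := T.V ⊕ T.V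
  arc := fun u v =>
    match u, v with
    | Sum.inl x, Sum.inl y => T.arc x y
    | Sum.inl x, Sum.inr y => T.arc x y
    | Sum.inr x, Sum.inl y => T.arc x y ∨ x = y
    | Sum.inr x, Sum.inr y => T.arc y x
  irrefl := by rintro (x | x) h <;> exact T.irrefl x h
  exactlyOne := by
    rintro (x | x) (y | y) hxy
    · exact T.exactlyOne x y (fun h => hxy (by rw [h]))
    · by_cases h : x = y
      · subst h; simp [T.irrefl x]
      · have := T.exactlyOne x y h
        simp only [not_or]
        constructor
        · intro ha; exact ⟨this.mp ha, fun h' => h h'.symm⟩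
        · intro ha; exact this.mpr ha.1
    · by_cases h : x = y
      · subst h; simp [T.irrefl x]
      · have := T.exactlyOne x y h
        constructor
        · rintro (ha | ha)
          · exact this.mp ha
          · exact absurd ha h
        · intro ha; exact Or.inl (this.mpr ha)
    · exact T.exactlyOne y x (fun h => hxy (by rw [h]))

/-- A tournament is strong if, for every ordered pair of nodes, there is a
directed path from the first to the second. -/
def Strong (T : Tournament) : Prop := ∀ u v : T.V, Relation.ReflTransGen T.arc u v

/-- `HasWalk T u v n` : there is a directed walk of length `n` from `u` to `v`. -/
def HasWalk (T : Tournament) (u v : T.V) (n : ℕ) : Prop :=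
  ∃ f : Fin (n + 1) → T.V, f 0 = u ∧ f (Fin.last n) = v ∧
    ∀ i : Fin n, T.arc (f i.castSucc) (f i.succ)

/-- The distance from `u` to `v`: the length of a shortest directed path. -/
def dist (T : Tournament) (u v : T.V) : ℕ := sInf {n | HasWalk T u v n}

/-- The diameter: the maximum distance over ordered pairs of distinct nodes. -/
def diam (T : Tournament) : ℕ :=
  (Finset.univ.filter (fun p : T.V × T.V => p.1 ≠ p.2)).sup
    (fun p => T.dist p.1 p.2)

/-- The Wiener index: the sum of distances over ordered pairs of distinct nodes. -/
def wiener (T : Tournament) : ℕ :=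
  ∑ p ∈ Finset.univ.filter (fun p : T.V × T.V => p.1 ≠ p.2), T.dist p.1 p.2

/-- The average distance `L(T) = W(T)/(m(m-1))` where `m` is the order. -/
def avgDist (T : Tournament) : ℝ :=
  (T.wiener : ℝ) / ((Fintype.card T.V : ℝ) * ((Fintype.card T.V : ℝ) - 1))

/-- `J` is a subtournament of `K`. -/
def IsSubtournament (J K : Tournament) : Prop :=
  ∃ f : J.V → K.V, Function.Injective f ∧ ∀ u v : J.V, J.arc u v ↔ K.arc (f u) (f v)

/-- The linear order on `t` nodes. -/
def linearTournament (t : ℕ) : Tournament where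
  V := Fin t
  arc := fun i j => i < j
  irrefl := fun i => lt_irrefl i
  exactlyOne := fun i j h => by
    rw [not_lt]
    exact ⟨le_of_lt, fun hle => hle.lt_of_ne h⟩

/-- A tournament is Hamiltonian if it has a directed cycle through all nodes. -/
def IsHamiltonian (T : Tournament) : Prop :=
  ∃ f : ZMod (Fintype.card T.V) ≃ T.V, ∀ i, T.arc (f i) (f (i + 1))

/-- `S` is an in-dominating set. -/
def InDom (T : Tournament) (S : Finset T.V) : Prop :=
  ∀ u, u ∉ S → ∃ v ∈ S, T.arc u v

/-- `S` is an out-dominating set. -/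
def OutDom (T : Tournament) (S : Finset T.V) : Prop :=
  ∀ u, u ∉ S → ∃ v ∈ S, T.arc v u

/-- The in-domination number. -/
def inDomNum (T : Tournament) : ℕ := sInf {n | ∃ S : Finset T.V, T.InDom S ∧ S.card = n}

/-- The out-domination number. -/
def outDomNum (T : Tournament) : ℕ := sInf {n | ∃ S : Finset T.V, T.OutDom S ∧ S.card = n}

end Tournament

open Tournament

/-! Collapsing each pair `{x, x'}` to `x` maps `ILTT(G)` onto `G`. Walks project along this map,
since an arc either projects to an arc or is contracted, and walks of positive length lift back.
Hence the four pairs of nodes lying over a pair `x ≠ y` of `G` all have distance `d(x, y)`, which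
accounts for `4 W(G)`. Each pair `{x, x'}` contributes `4 = d(x', x) + d(x, x') = 1 + 3`: the
distance `3` is realised by lifting a directed triangle through `x`, which exists because `G` is
strong, and a walk of length `1` or `2` from `x` to `x'` would project to a loop or a directed
`2`-cycle of `G`. -/

theorem exists_rel_and_not_of_reflTransGen {α : Type*} {r : α → α → Prop} {p : α → Prop} {a b : α}
    (h : Relation.ReflTransGen r a b) (ha : p a) (hb : ¬ p b) : ∃ c d, r c d ∧ p c ∧ ¬ p d := by
  induction h with
  | refl => exact absurd ha hb
  | @tail c d _ hcd ih =>
    by_cases hc : p c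
    · exact ⟨c, d, hcd, hc, hb⟩
    · exact ih hc

namespace Tournament

variable {S T : Tournament}

theorem arc_asymm {x y : T.V} (h : T.arc x y) : ¬ T.arc y x := by
  have hne : x ≠ y := by
    rintro rfl
    exact T.irrefl x h
  exact (T.exactlyOne x y hne).1 h

theorem arc_of_not_arc {x y : T.V} (hne : x ≠ y) (h : ¬ T.arc x y) : T.arc y x :=
  (T.exactlyOne y x hne.symm).2 h

section Walk

variable {u v : T.V} {n : ℕ}

theorem hasWalk_zero : T.HasWalk u v 0 ↔ u = v := by
  constructor
  · rintro ⟨f, rfl, rfl, -⟩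
    rfl
  · rintro rfl
    exact ⟨fun _ => u, rfl, rfl, fun i => i.elim0⟩

theorem hasWalk_succ : T.HasWalk u v (n + 1) ↔ ∃ w, T.arc u w ∧ T.HasWalk w v n := by
  constructor
  · rintro ⟨f, rfl, rfl, harc⟩
    exact ⟨f 1, harc 0, Fin.tail f, rfl, rfl, fun i => harc i.succ⟩
  · rintro ⟨w, huw, f, rfl, rfl, harc⟩
    exact ⟨Fin.cons u f, rfl, rfl, Fin.cases huw harc⟩

theorem hasWalk_one : T.HasWalk u v 1 ↔ T.arc u v := by
  simp only [hasWalk_succ, hasWalk_zero, exists_eq_right]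

theorem hasWalk_two : T.HasWalk u v 2 ↔ ∃ w, T.arc u w ∧ T.arc w v := by
  simp only [hasWalk_succ (n := 1), hasWalk_one]

theorem exists_hasWalk_of_reflTransGen (h : Relation.ReflTransGen T.arc u v) :
    ∃ n, T.HasWalk u v n := by
  induction h using Relation.ReflTransGen.head_induction_on with
  | refl => exact ⟨0, hasWalk_zero.2 rfl⟩
  | head huw _ ih =>
    obtain ⟨n, hn⟩ := ih
    exact ⟨n + 1, hasWalk_succ.2 ⟨_, huw, hn⟩⟩

theorem HasWalk.dist_le (h : T.HasWalk u v n) : T.dist u v ≤ n :=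
  Nat.sInf_le h

theorem HasWalk.hasWalk_dist (h : T.HasWalk u v n) : T.HasWalk u v (T.dist u v) :=
  Nat.sInf_mem (s := {n | T.HasWalk u v n}) ⟨n, h⟩

theorem HasWalk.dist_eq (h : T.HasWalk u v n) (hmin : ∀ m < n, ¬ T.HasWalk u v m) :
    T.dist u v = n :=
  h.dist_le.antisymm (not_lt.1 fun hlt => hmin _ hlt h.hasWalk_dist)

theorem dist_self (T : Tournament) (x : T.V) : T.dist x x = 0 :=
  Nat.le_zero.1 (hasWalk_zero.2 rfl).dist_le

theorem dist_eq_one_of_arc (h : T.arc u v) : T.dist u v = 1 := by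
  refine (hasWalk_one.2 h).dist_eq fun m hm hwalk => ?_
  obtain rfl := Nat.lt_one_iff.1 hm
  obtain rfl := hasWalk_zero.1 hwalk
  exact T.irrefl u h

theorem wiener_eq_sum (T : Tournament) : T.wiener = ∑ x, ∑ y, T.dist x y := by
  rw [wiener, Finset.sum_filter_of_ne, Fintype.sum_prod_type]
  rintro ⟨x, y⟩ - hdist hxy
  obtain rfl : x = y := hxy
  exact hdist (T.dist_self x)

end Walk

section Triangle

theorem Strong.exists_arc (hT : T.Strong) [Nontrivial T.V] (x : T.V) : ∃ a, T.arc x a := by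
  obtain ⟨y, hyx⟩ := exists_ne x
  obtain rfl | ⟨a, hxa, -⟩ := (hT x y).cases_head
  · exact absurd rfl hyx
  · exact ⟨a, hxa⟩

theorem Strong.exists_triangle (hT : T.Strong) [Nontrivial T.V] (x : T.V) :
    ∃ a b, T.arc x a ∧ T.arc a b ∧ T.arc b x := by
  obtain ⟨y, hxy⟩ := hT.exists_arc x
  -- A path from an out-neighbour of `x` back to `x` has to leave the out-neighbourhood of `x`.
  obtain ⟨a, b, hab, hxa, hxb⟩ :=
    exists_rel_and_not_of_reflTransGen (p := T.arc x) (hT y x) hxy (T.irrefl x)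
  have hne : x ≠ b := by
    rintro rfl
    exact arc_asymm hxa hab
  exact ⟨a, b, hxa, hab, arc_of_not_arc hne hxb⟩

end Triangle

/-- `S` is a substitution of tournaments into the nodes of `T`: each node `x` of `T` is replaced by
a nonempty tournament, the fibre of `f` over `x`, and arcs between distinct fibres are those of `T`.
Since `S` and `T` are tournaments, it suffices to require that arcs of `T` lift. -/
structure IsSubstitution (S T : Tournament) (f : S.V → T.V) : Prop where
  surjective : Function.Surjective f
  arc_of_arc : ∀ ⦃u v⦄, T.arc (f u) (f v) → S.arc u v

namespace IsSubstitution

variable {f : S.V → T.V} {u v : S.V} {n : ℕ}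

theorem arc_or_eq (hf : IsSubstitution S T f) (h : S.arc u v) :
    T.arc (f u) (f v) ∨ f u = f v := by
  by_contra! hne
  exact arc_asymm h (hf.arc_of_arc (arc_of_not_arc hne.2 hne.1))

theorem exists_hasWalk_le (hf : IsSubstitution S T f) (h : S.HasWalk u v n) :
    ∃ m ≤ n, T.HasWalk (f u) (f v) m := by
  induction n generalizing u with
  | zero => exact ⟨0, le_rfl, hasWalk_zero.2 (congrArg f (hasWalk_zero.1 h))⟩
  | succ n ih =>
    obtain ⟨w, huw, hwv⟩ := hasWalk_succ.1 h
    obtain ⟨m, hmn, hwalk⟩ := ih hwv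
    obtain harc | heq := hf.arc_or_eq huw
    · exact ⟨m + 1, Nat.succ_le_succ hmn, hasWalk_succ.2 ⟨f w, harc, hwalk⟩⟩
    · exact ⟨m, Nat.le_succ_of_le hmn, heq ▸ hwalk⟩

theorem hasWalk_of_hasWalk (hf : IsSubstitution S T f) (hn : 1 ≤ n)
    (h : T.HasWalk (f u) (f v) n) : S.HasWalk u v n := by
  induction n, hn using Nat.le_induction generalizing u with
  | base => exact hasWalk_one.2 (hf.arc_of_arc (hasWalk_one.1 h))
  | succ n _ ih =>
    obtain ⟨y, huy, hyv⟩ := hasWalk_succ.1 h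
    obtain ⟨w, rfl⟩ := hf.surjective y
    exact hasWalk_succ.2 ⟨w, hf.arc_of_arc huy, ih hyv⟩

theorem dist_eq (hf : IsSubstitution S T f) (hne : f u ≠ f v)
    (hreach : Relation.ReflTransGen T.arc (f u) (f v)) :
    S.dist u v = T.dist (f u) (f v) := by
  obtain ⟨n, hn⟩ := exists_hasWalk_of_reflTransGen hreach
  have hpos : 1 ≤ T.dist (f u) (f v) :=
    Nat.one_le_iff_ne_zero.2 fun h0 => hne (hasWalk_zero.1 (h0 ▸ hn.hasWalk_dist))
  have hlift : S.HasWalk u v (T.dist (f u) (f v)) := hf.hasWalk_of_hasWalk hpos hn.hasWalk_dist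
  obtain ⟨m, hm, hproj⟩ := hf.exists_hasWalk_le hlift.hasWalk_dist
  exact hlift.dist_le.antisymm (hproj.dist_le.trans hm)

end IsSubstitution

section ILTT

/-- An original node, as a node of the ILTT extension. -/
def orig (T : Tournament) (x : T.V) : T.ILTT.V := Sum.inl x

/-- The clone of a node in the ILTT extension. -/
def clone (T : Tournament) (x : T.V) : T.ILTT.V := Sum.inr x

/-- The projection of the ILTT extension that identifies each clone with its original node. -/
def base (T : Tournament) : T.ILTT.V → T.V := Sum.elim id id

theorem base_orig (T : Tournament) (x : T.V) : T.base (T.orig x) = x := rfl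

theorem base_clone (T : Tournament) (x : T.V) : T.base (T.clone x) = x := rfl

theorem isSubstitution_base (T : Tournament) : IsSubstitution T.ILTT T T.base where
  surjective x := ⟨T.orig x, T.base_orig x⟩
  arc_of_arc := by
    rintro (x | x) (y | y) h
    · exact h
    · exact h
    · exact Or.inl h
    · exact h

theorem ILTT_arc_orig_left {x : T.V} {v : T.ILTT.V} :
    T.ILTT.arc (T.orig x) v ↔ T.arc x (T.base v) := by
  cases v <;> rfl

theorem ILTT_arc_clone_right {u : T.ILTT.V} {y : T.V} :
    T.ILTT.arc u (T.clone y) ↔ T.arc (T.base u) y := by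
  cases u <;> rfl

theorem ILTT_arc_clone_orig (T : Tournament) (x : T.V) : T.ILTT.arc (T.clone x) (T.orig x) :=
  Or.inr rfl

theorem Strong.dist_ILTT (hT : T.Strong) {u v : T.ILTT.V} {x y : T.V} (hu : T.base u = x)
    (hv : T.base v = y) (hxy : x ≠ y) : T.ILTT.dist u v = T.dist x y := by
  subst hu hv
  exact T.isSubstitution_base.dist_eq hxy (hT _ _)

theorem dist_ILTT_clone_orig (T : Tournament) (x : T.V) :
    T.ILTT.dist (T.clone x) (T.orig x) = 1 :=
  dist_eq_one_of_arc (T.ILTT_arc_clone_orig x)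

theorem Strong.dist_ILTT_orig_clone (hT : T.Strong) [Nontrivial T.V] (x : T.V) :
    T.ILTT.dist (T.orig x) (T.clone x) = 3 := by
  obtain ⟨a, b, hxa, hab, hbx⟩ := hT.exists_triangle x
  have htriangle : T.HasWalk x x 3 := hasWalk_succ.2 ⟨a, hxa, hasWalk_two.2 ⟨b, hab, hbx⟩⟩
  have hlift : T.ILTT.HasWalk (T.orig x) (T.clone x) 3 :=
    T.isSubstitution_base.hasWalk_of_hasWalk (by lia) htriangle
  refine hlift.dist_eq fun m hm hwalk => ?_
  interval_cases m
  · exact Sum.inl_ne_inr (hasWalk_zero.1 hwalk)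
  · exact T.irrefl x (ILTT_arc_orig_left.1 (hasWalk_one.1 hwalk))
  · obtain ⟨w, hxw, hwx⟩ := hasWalk_two.1 hwalk
    exact arc_asymm (ILTT_arc_orig_left.1 hxw) (ILTT_arc_clone_right.1 hwx)

theorem sum_ILTT {M : Type*} [AddCommMonoid M] (T : Tournament) (f : T.ILTT.V → M) :
    ∑ u, f u = ∑ x, (f (T.orig x) + f (T.clone x)) :=
  (Fintype.sum_sum_type f).trans Finset.sum_add_distrib.symm

theorem wiener_ILTT_eq_sum (T : Tournament) :
    T.ILTT.wiener = ∑ x, ∑ y,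
      ((T.ILTT.dist (T.orig x) (T.orig y) + T.ILTT.dist (T.orig x) (T.clone y)) +
        (T.ILTT.dist (T.clone x) (T.orig y) + T.ILTT.dist (T.clone x) (T.clone y))) := by
  rw [wiener_eq_sum, sum_ILTT]
  simp only [sum_ILTT, ← Finset.sum_add_distrib]

theorem Strong.sum_dist_ILTT (hT : T.Strong) [Nontrivial T.V] (x y : T.V) :
    (T.ILTT.dist (T.orig x) (T.orig y) + T.ILTT.dist (T.orig x) (T.clone y)) +
      (T.ILTT.dist (T.clone x) (T.orig y) + T.ILTT.dist (T.clone x) (T.clone y)) =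
    4 * T.dist x y + if x = y then 4 else 0 := by
  split_ifs with hxy
  · subst hxy
    simp only [dist_self, hT.dist_ILTT_orig_clone, dist_ILTT_clone_orig]
  · rw [hT.dist_ILTT (T.base_orig x) (T.base_orig y) hxy,
      hT.dist_ILTT (T.base_orig x) (T.base_clone y) hxy,
      hT.dist_ILTT (T.base_clone x) (T.base_orig y) hxy,
      hT.dist_ILTT (T.base_clone x) (T.base_clone y) hxy]
    ring

end ILTT

end Tournament

/-- For a strong tournament `G` of order `n ≥ 3`,
`W(ILTT(G)) = 4(n + W(G))`. -/
theorem stmt6 (G : Tournament) (n : ℕ) (hn : Fintype.card G.V = n)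
    (hcard : 3 ≤ n) (hG : G.Strong) :
    (G.ILTT).wiener = 4 * (n + G.wiener) := by
  have : Nontrivial G.V := Fintype.one_lt_card_iff_nontrivial.1 (by lia)
  calc G.ILTT.wiener
      = ∑ x, ∑ y, (4 * G.dist x y + if x = y then 4 else 0) := by
        simp only [wiener_ILTT_eq_sum, hG.sum_dist_ILTT]
    _ = 4 * ∑ x, ∑ y, G.dist x y + Fintype.card G.V * 4 := by
        simp only [Finset.sum_add_distrib, ← Finset.mul_sum, Fintype.sum_ite_eq,
          Finset.sum_const, Finset.card_univ, smul_eq_mul]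
    _ = 4 * (n + G.wiener) := by
        rw [hn, ← wiener_eq_sum]
        ring
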